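/- arXiv:1208.1037 — 2 statements merged into one kernel-verified Lean document; each statement's English description precedes it below -/
import Mathlib

section
/- Let K be a Hopf subalgebra of H and C a simple subcoalgebra of H. Then {}^C K ⊆ C·K·S(C), where S is the antipode of H (so S(C) is the simple subcoalgebra C* dual to C). -/
open TensorProduct

namespace MackeyPaper

noncomputable section

universe v

variable (k : Type) [Field k] [CharZero k] [IsAlgClosed k]
variable (H : Type) [Ring H] [HopfAlgebra k H]

/-- A subcoalgebra of `H`: a `k`-subspace `C` with `Δ(C) ⊆ C ⊗ C`. -/
def IsSubcoalgebra (C : Submodule k H) : Prop :=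
  ∀ c ∈ C, Coalgebra.comul (R := k) c ∈
    LinearMap.range (TensorProduct.map C.subtype C.subtype)

/-- A simple (nonzero, minimal) subcoalgebra of `H`. -/
def IsSimpleSubcoalgebra (C : Submodule k H) : Prop :=
  IsSubcoalgebra k H C ∧ C ≠ ⊥ ∧
    ∀ D : Submodule k H, D ≤ C → IsSubcoalgebra k H D → D ≠ ⊥ → D = C

/-- A Hopf subalgebra of `H`: a subalgebra which is a subcoalgebra and is
stable under the antipode. -/
def IsHopfSubalgebra (K : Subalgebra k H) : Prop :=
  IsSubcoalgebra k H K.toSubmodule ∧ ∀ x ∈ K, HopfAlgebra.antipode (R := k) x ∈ K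

/-- `Λ` is the (two-sided) idempotent integral of the Hopf subalgebra `K`,
i.e. the integral normalized by `ε(Λ) = 1`. -/
def IsIdempotentIntegral (K : Subalgebra k H) (Λ : H) : Prop :=
  Λ ∈ K ∧ Coalgebra.counit (R := k) Λ = 1 ∧
    ∀ x ∈ K, x * Λ = Coalgebra.counit (R := k) x • Λ ∧
      Λ * x = Coalgebra.counit (R := k) x • Λ

/-- A cocommutative element of `H`; the cocommutative elements of `H` form
the character ring `C(H^*)`. -/
def IsCocomm (x : H) : Prop :=
  (TensorProduct.comm k H H) (Coalgebra.comul (R := k) x) = Coalgebra.comul (R := k) x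

/-- The character ring `C(H^*)`, i.e. the space of cocommutative elements of `H`,
as a `k`-subspace of `H`. -/
def charRing : Submodule k H :=
  LinearMap.ker ((TensorProduct.comm k H H).toLinearMap ∘ₗ Coalgebra.comul (R := k)
      - Coalgebra.comul (R := k))

/-- `d` is the irreducible character (of `H^*`) associated to the simple
subcoalgebra `C`: the unique cocommutative element of `C` whose counit is the
positive square root of `dim_k C`. -/
def IsCharacterOf (d : H) (C : Submodule k H) : Prop :=
  d ∈ C ∧ IsCocomm k H d ∧
    Coalgebra.counit (R := k) d = ((Nat.sqrt (Module.finrank k ↥C) : ℕ) : k)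

/-- The right coset `CK` of a subcoalgebra `C`, i.e. the subspace `C·K`. -/
def CKsub (K : Subalgebra k H) (C : Submodule k H) : Submodule k H :=
  C * K.toSubmodule

/-- The conjugate Hopf subalgebra `ᶜK` of `K` by a simple subcoalgebra `C`
(with associated irreducible character `c`): the span of all simple
subcoalgebras of `H` whose irreducible character `d` satisfies
`d·c·Λ_K = ε(d)·c·Λ_K`.  (The condition is stated for all cocommutative
elements of `C` resp. `D`; this is equivalent, since the cocommutative
elements of a simple subcoalgebra are exactly the scalar multiples of its
irreducible character.) -/
def conjK (K : Subalgebra k H) (Λ : H) (C : Submodule k H) : Submodule k H :=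
  sSup {D : Submodule k H | IsSimpleSubcoalgebra k H D ∧
    ∀ d ∈ D, IsCocomm k H d → ∀ c ∈ C, IsCocomm k H c →
      d * (c * Λ) = Coalgebra.counit (R := k) d • (c * Λ)}

/-- A complete irredundant system of representatives (by simple subcoalgebras)
of the double cosets `L\H/K`.  (Taking `L = ⊥` gives a system of
representatives of the right cosets `H/K`.) -/
def IsDoubleCosetReps (L K : Subalgebra k H) {ι : Type} (rep : ι → Submodule k H) : Prop :=
  (∀ i, IsSimpleSubcoalgebra k H (rep i)) ∧
  (∀ i j, L.toSubmodule * rep i * K.toSubmodule = L.toSubmodule * rep j * K.toSubmodule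
      → i = j) ∧
  (∀ C : Submodule k H, IsSimpleSubcoalgebra k H C →
      ∃ i, C ≤ L.toSubmodule * rep i * K.toSubmodule)

section Ind

variable (K : Subalgebra k H) (M : Type v) [AddCommGroup M] [Module k M]
  [Module ↥K M] [IsScalarTower k ↥K M]

/-- The relations defining the induced module `H ⊗_K M` as a quotient of
`H ⊗_k M`: the `H`-submodule generated by the elements `a ⊗ m - 1 ⊗ a·m`
for `a ∈ K` (equivalently, spanned by all `h·a ⊗ m - h ⊗ a·m`). -/
def indRel : Submodule H (H ⊗[k] M) :=
  Submodule.span H {z | ∃ (a : ↥K) (m : M),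
    z = (a : H) ⊗ₜ[k] m - (1 : H) ⊗ₜ[k] (a • m)}

/-- The induced module `M↑_K^H = H ⊗_K M`, a left `H`-module. -/
abbrev Ind := (H ⊗[k] M) ⧸ indRel k H K M

variable (C : Submodule k H)

/-- The underlying space `CK ⊗_k M` of which the conjugate module `ᶜM` is a
quotient. -/
def CKM : Type _ := ↥(CKsub k H K C) ⊗[k] M

instance : AddCommGroup (CKM k H K M C) :=
  inferInstanceAs (AddCommGroup (↥(CKsub k H K C) ⊗[k] M))

instance : Module k (CKM k H K M C) :=
  inferInstanceAs (Module k (↥(CKsub k H K C) ⊗[k] M))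

/-- The pure tensor `x ⊗ m` as an element of `CK ⊗_k M`. -/
def ckmk (x : ↥(CKsub k H K C)) (m : M) : CKM k H K M C := x ⊗ₜ[k] m

/-- The relations defining the conjugate module `ᶜM = CK ⊗_K M` as a quotient
of `CK ⊗_k M`: `x·a ⊗ m - x ⊗ a·m` for `a ∈ K`. -/
def conjRel : Submodule k (CKM k H K M C) :=
  Submodule.span k {z | ∃ (x : ↥(CKsub k H K C)) (a : ↥K) (m : M)
    (hxa : (x : H) * (a : H) ∈ CKsub k H K C),
    z = ckmk k H K M C ⟨(x : H) * (a : H), hxa⟩ m - ckmk k H K M C x (a • m)}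

/-- The conjugate module `ᶜM := CK ⊗_K M`. -/
abbrev ConjM := CKM k H K M C ⧸ conjRel k H K M C

/-- The canonical copy of the conjugate module `ᶜM = CK ⊗_K M` inside
`H ⊗_K M` (the image of `CK ⊗_K M` under multiplication; this is indeed a
copy of `ᶜM` since `H` is a free right `K`-module and `CK` is one of the
coset summands). -/
def conjMsub : Submodule k (Ind k H K M) :=
  Submodule.span k {z | ∃ (x : H) (_ : x ∈ CKsub k H K C) (m : M),
    z = Submodule.Quotient.mk (x ⊗ₜ[k] m)}

end Ind

section Comp

variable (L K : Subalgebra k H) (Λ : H) (C : Submodule k H)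
variable (M : Type v) [AddCommGroup M] [Module k M] [Module ↥K M] [IsScalarTower k ↥K M]

/-- The underlying space `L ⊗_k (CK ⊗_k M)`. -/
def LCM : Type _ := ↥L ⊗[k] CKM k H K M C

instance : AddCommGroup (LCM k H L K C M) :=
  inferInstanceAs (AddCommGroup (↥L ⊗[k] CKM k H K M C))

instance : Module k (LCM k H L K C M) :=
  inferInstanceAs (Module k (↥L ⊗[k] CKM k H K M C))

/-- The pure tensor `l ⊗ w` as an element of `L ⊗_k (CK ⊗_k M)`. -/
def lcmk (l : ↥L) (w : CKM k H K M C) : LCM k H L K C M := l ⊗ₜ[k] w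

/-- The relations defining `L ⊗_{L ∩ ᶜK} ᶜM` as a quotient of
`L ⊗_k (CK ⊗_k M)`: the balancedness relations over `L ∩ ᶜK` (first set),
together with (the image of) the relations defining `ᶜM = CK ⊗_K M`
(second set). -/
def compRel : Submodule k (LCM k H L K C M) :=
  Submodule.span k
    ({z | ∃ (l : ↥L) (a : H) (haL : a ∈ L) (_ : a ∈ conjK k H K Λ C)
        (x : ↥(CKsub k H K C)) (m : M) (hax : a * (x : H) ∈ CKsub k H K C),
        z = lcmk k H L K C M ⟨(l : H) * a, mul_mem l.2 haL⟩ (ckmk k H K M C x m)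
          - lcmk k H L K C M l (ckmk k H K M C ⟨a * (x : H), hax⟩ m)} ∪
     {z | ∃ (l : ↥L) (x : ↥(CKsub k H K C)) (a : ↥K) (m : M)
        (hxa : (x : H) * (a : H) ∈ CKsub k H K C),
        z = lcmk k H L K C M l (ckmk k H K M C ⟨(x : H) * (a : H), hxa⟩ m)
          - lcmk k H L K C M l (ckmk k H K M C x (a • m))})

/-- The module `L ⊗_{L ∩ ᶜK} ᶜM` (a left `L`-module via multiplication on the
first tensor factor). -/
abbrev Comp := LCM k H L K C M ⧸ compRel k H L K Λ C M

end Comp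

open DirectSum

section Mackey

variable (L K : Subalgebra k H) (Λ : H)

/-- The Mackey isomorphism property for the pair `(L, K)` at the `K`-module
`M`: for any system of double coset representatives, the left-multiplication
map `⊕_C L ⊗_{L ∩ ᶜK} ᶜM → M↑_K^H↓_L^H`, `l ⊗ v ↦ l·v`, is an isomorphism of
`L`-modules.  (A `k`-linear map satisfying the displayed formula on the
spanning elements is automatically `L`-equivariant for the evident
`L`-actions, so this property is stated for `k`-linear maps.) -/
def MackeyAt (M : Type v) [AddCommGroup M] [Module k M] [Module ↥K M]
    [IsScalarTower k ↥K M] [Module.Finite k M] : Prop :=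
  ∀ (ι : Type) [DecidableEq ι] (rep : ι → Submodule k H),
    IsDoubleCosetReps k H L K rep →
    ∃ π : (⨁ i : ι, Comp k H L K Λ (rep i) M) →ₗ[k] Ind k H K M,
      Function.Bijective π ∧
      ∀ (i : ι) (l : ↥L) (x : ↥(CKsub k H K (rep i))) (m : M),
        π (DirectSum.of (fun i => Comp k H L K Λ (rep i) M) i
            (Submodule.Quotient.mk (lcmk k H L K (rep i) M l (ckmk k H K M (rep i) x m)))) =
          Submodule.Quotient.mk (((l : H) * (x : H)) ⊗ₜ[k] m)

/-- `(L, K)` is a Mackey pair of Hopf subalgebras of `H` (here `Λ` is the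
idempotent integral of `K`): for every finite-dimensional `K`-module `M` the
left-multiplication homomorphism `π_M` is an isomorphism. -/
def IsMackeyPair : Prop :=
  ∀ (M : Type v) [AddCommGroup M] [Module k M] [Module ↥K M]
    [IsScalarTower k ↥K M] [Module.Finite k M], MackeyAt k H L K Λ M

end Mackey


theorem isNilpotent_of_trace_eq_zero_of_mul_mem {k V : Type*} [Field k] [CharZero k]
    [AddCommGroup V] [Module k V] [FiniteDimensional k V] (J : Submodule k (Module.End k V))
    (hmul : ∀ a ∈ J, ∀ b ∈ J, a * b ∈ J) (htr : ∀ a ∈ J, LinearMap.trace k V a = 0)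
    {a : Module.End k V} (ha : a ∈ J) : IsNilpotent a := by
  have hint : IsIntegral k a := Algebra.IsIntegral.isIntegral a
  obtain ⟨g, hg, hdvd⟩ :=
    (minpoly k a).exists_eq_pow_rootMultiplicity_mul_and_not_dvd (minpoly.ne_zero hint) 0
  rw [map_zero, sub_zero] at hg hdvd
  set r := (minpoly k a).rootMultiplicity 0
  have hcop : IsCoprime ((Polynomial.X : Polynomial k) ^ (r + 1)) g :=
    (Polynomial.irreducible_X.coprime_iff_not_dvd.mpr hdvd).pow_left
  obtain ⟨u, v, huv⟩ := hcop
  have hpow : ∀ n : ℕ, a ^ (n + 1) ∈ J := by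
    intro n
    induction n with
    | zero => simpa using ha
    | succ n ih => rw [pow_succ]; exact hmul _ ih _ ha
  have hpoly : ∀ q : Polynomial k, Polynomial.aeval a (q * Polynomial.X ^ (r + 1)) ∈ J := by
    intro q
    induction q using Polynomial.induction_on' with
    | add p q hp hq => rw [add_mul, map_add]; exact J.add_mem hp hq
    | monomial n c =>
      rw [map_mul, Polynomial.aeval_monomial, map_pow, Polynomial.aeval_X, mul_assoc, ← pow_add,
        ← Algebra.smul_def, ← add_assoc]
      exact J.smul_mem _ (hpow _)
  have hzero : Polynomial.aeval a (Polynomial.X ^ (r + 1) * g) = 0 := by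
    rw [pow_succ', mul_assoc, ← hg, map_mul, minpoly.aeval, mul_zero]
  have hidem : IsIdempotentElem (Polynomial.aeval a (u * Polynomial.X ^ (r + 1))) := by
    have h : u * Polynomial.X ^ (r + 1) * (u * Polynomial.X ^ (r + 1)) =
        u * Polynomial.X ^ (r + 1) - u * v * (Polynomial.X ^ (r + 1) * g) := by
      linear_combination (u * Polynomial.X ^ (r + 1)) * huv
    rw [IsIdempotentElem, ← map_mul, h, map_sub, map_mul _ (u * v), hzero, mul_zero, sub_zero]
  have he : Polynomial.aeval a (u * Polynomial.X ^ (r + 1)) = 0 :=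
    LinearMap.IsIdempotentElem.eq_zero_of_trace_eq_zero hidem (htr _ (hpoly u))
  refine ⟨r + 1, ?_⟩
  have h : (Polynomial.X : Polynomial k) ^ (r + 1) =
      Polynomial.X ^ (r + 1) * (u * Polynomial.X ^ (r + 1)) +
        v * (Polynomial.X ^ (r + 1) * g) := by
    linear_combination -(Polynomial.X ^ (r + 1)) * huv
  have h' := congrArg (Polynomial.aeval a) h
  rwa [map_add, map_mul, map_mul _ v, he, hzero, mul_zero, mul_zero, add_zero, map_pow,
    Polynomial.aeval_X] at h'

theorem exists_ne_zero_of_trace_eq_zero_of_mul_mem {k V : Type*} [Field k] [CharZero k]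
    [AddCommGroup V] [Module k V] [FiniteDimensional k V] [Nontrivial V]
    (J : Submodule k (Module.End k V))
    (hmul : ∀ a ∈ J, ∀ b ∈ J, a * b ∈ J) (htr : ∀ a ∈ J, LinearMap.trace k V a = 0) :
    ∃ w : V, w ≠ 0 ∧ ∀ a ∈ J, a w = 0 := by
  let _ : LieRing (Module.End k V) := LieRing.ofAssociativeRing
  let L : LieSubalgebra k (Module.End k V) :=
    { J with
      lie_mem' := fun {a b} ha hb => by
        rw [Ring.lie_def]
        exact J.sub_mem (hmul a ha b hb) (hmul b hb a ha) }
  have hL : LieModule.IsNilpotent L V := by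
    rw [LieModule.isNilpotent_iff_forall' (R := k)]
    intro x
    exact isNilpotent_of_trace_eq_zero_of_mul_mem J hmul htr x.2
  obtain ⟨w, hw⟩ := @exists_ne _ (LieModule.nontrivial_max_triv_of_isNilpotent k L V) 0
  refine ⟨w, fun h => hw (Subtype.ext h), fun a ha => ?_⟩
  exact (LieModule.mem_maxTrivSubmodule k L V (w : V)).mp w.2 ⟨a, ha⟩

section TensorMembership

variable {k H : Type*} [Field k] [AddCommGroup H] [Module k H]

theorem tmul_mem_range_map {P Q : Submodule k H} {x y : H} (hx : x ∈ P) (hy : y ∈ Q) :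
    x ⊗ₜ[k] y ∈ LinearMap.range (TensorProduct.map P.subtype Q.subtype) :=
  ⟨⟨x, hx⟩ ⊗ₜ ⟨y, hy⟩, rfl⟩

theorem map_mem_of_mem_range_map {V : Type*} [AddCommGroup V] [Module k V] {P Q : Submodule k H}
    {N : Submodule k V} (φ : H ⊗[k] H →ₗ[k] V) (h : ∀ x ∈ P, ∀ y ∈ Q, φ (x ⊗ₜ y) ∈ N)
    {t : H ⊗[k] H} (ht : t ∈ LinearMap.range (TensorProduct.map P.subtype Q.subtype)) :
    φ t ∈ N := by
  obtain ⟨s, rfl⟩ := ht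
  induction s with
  | zero => simp
  | add a b ha hb => rw [map_add, map_add]; exact N.add_mem ha hb
  | tmul x y => exact h x x.2 y y.2

theorem exists_sum_tmul_basis {ι V W : Type*} [AddCommGroup V] [Module k V] [AddCommGroup W]
    [Module k W] [Fintype ι] (e : Module.Basis ι k W) (t : V ⊗[k] W) :
    ∃ m : ι → V, t = ∑ j, m j ⊗ₜ e j := by
  induction t with
  | zero => exact ⟨0, by simp⟩
  | add a b ha hb =>
    obtain ⟨m, rfl⟩ := ha
    obtain ⟨m', rfl⟩ := hb
    exact ⟨m + m', by simp [add_tmul, Finset.sum_add_distrib]⟩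
  | tmul x y =>
    refine ⟨fun j => e.repr y j • x, ?_⟩
    conv_lhs => rw [← e.sum_repr y, tmul_sum]
    simp [smul_tmul]

theorem mem_range_map_of_slices [FiniteDimensional k H] {P Q : Submodule k H} {t : H ⊗[k] H}
    (hl : ∀ f : H →ₗ[k] k, TensorProduct.rid k H (f.lTensor H t) ∈ P)
    (hr : ∀ f : H →ₗ[k] k, TensorProduct.lid k H (f.rTensor H t) ∈ Q) :
    t ∈ LinearMap.range (TensorProduct.map P.subtype Q.subtype) := by
  obtain ⟨pQ, hpQ⟩ := Q.subtype.exists_leftInverse_of_injective Q.ker_subtype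
  let e := Module.finBasis k H
  obtain ⟨m, rfl⟩ := exists_sum_tmul_basis e t
  have hm : ∀ j, m j ∈ P := by
    intro j
    have h := hl (e.coord j)
    simpa [Finsupp.single_apply, ite_smul] using h
  have hfix : ∑ j, m j ⊗ₜ e j = ∑ j, m j ⊗ₜ[k] ((pQ (e j) : Q) : H) := by
    set t := ∑ j, m j ⊗ₜ[k] e j with ht
    obtain ⟨s, hs⟩ := exists_sum_tmul_basis e (TensorProduct.comm k H H t)
    replace hs : t = ∑ j, e j ⊗ₜ[k] s j := by
      apply (TensorProduct.comm k H H).injective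
      simp [hs]
    have hsQ : ∀ j, s j ∈ Q := by
      intro j
      have h := hr (e.coord j)
      rw [hs] at h
      simpa [Finsupp.single_apply, ite_smul] using h
    have h1 : (Q.subtype ∘ₗ pQ).lTensor H t = t := by
      rw [hs, map_sum]
      refine Finset.sum_congr rfl fun j _ => ?_
      have := LinearMap.congr_fun hpQ ⟨s j, hsQ j⟩
      simp at this
      simp [this]
    rw [← h1, ht]
    simp
  rw [hfix]
  exact Submodule.sum_mem _ fun j _ => tmul_mem_range_map (hm j) (pQ (e j)).2

end TensorMembership

section Comatrix

variable {k H : Type} [Field k] [Ring H] [HopfAlgebra k H]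
  {ι κ : Type*} [Fintype ι] [DecidableEq ι] [Fintype κ] [DecidableEq κ]

/-- A comatrix over `H`: a square matrix `m` with `Δ(mᵢⱼ) = ∑ₗ mᵢₗ ⊗ mₗⱼ` and `ε(mᵢⱼ) = δᵢⱼ`. -/
structure IsComatrix (m : Matrix ι ι H) : Prop where
  comul : ∀ i j, Coalgebra.comul (R := k) (m i j) = ∑ l, m i l ⊗ₜ[k] m l j
  counit : ∀ i j, Coalgebra.counit (R := k) (m i j) = (1 : Matrix ι ι k) i j

theorem IsComatrix.mul {m : Matrix ι ι H} {n : Matrix κ κ H} (hm : IsComatrix (k := k) m)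
    (hn : IsComatrix (k := k) n) :
    IsComatrix (k := k) (Matrix.of fun (a b : ι × κ) => m a.1 b.1 * n a.2 b.2) where
  comul a b := by
    simp only [Matrix.of_apply, Bialgebra.comul_mul, hm.comul, hn.comul, Finset.sum_mul_sum,
      Algebra.TensorProduct.tmul_mul_tmul, Fintype.sum_prod_type]
  counit a b := by
    simp only [Matrix.of_apply, Bialgebra.counit_mul, hm.counit, hn.counit, Matrix.one_apply,
      Prod.ext_iff]
    split_ifs <;> simp_all

theorem IsComatrix.map_antipode_mul {m : Matrix ι ι H} (hm : IsComatrix (k := k) m) :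
    m.map (HopfAlgebra.antipode k) * m = 1 := by
  ext i j
  have h := HopfAlgebra.mul_antipode_rTensor_comul_apply (R := k) (m i j)
  rw [hm.comul, hm.counit] at h
  simpa [Matrix.mul_apply, Matrix.one_apply, apply_ite (algebraMap k H)] using h

theorem IsComatrix.mul_map_antipode {m : Matrix ι ι H} (hm : IsComatrix (k := k) m) :
    m * m.map (HopfAlgebra.antipode k) = 1 := by
  ext i j
  have h := HopfAlgebra.mul_antipode_lTensor_comul_apply (R := k) (m i j)
  rw [hm.comul, hm.counit] at h
  simpa [Matrix.mul_apply, Matrix.one_apply, apply_ite (algebraMap k H)] using h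

theorem IsComatrix.comul_antipode {m : Matrix ι ι H} (hm : IsComatrix (k := k) m) (i j : ι) :
    Coalgebra.comul (R := k) (HopfAlgebra.antipode k (m i j)) =
      ∑ l, HopfAlgebra.antipode k (m l j) ⊗ₜ[k] HopfAlgebra.antipode k (m i l) := by
  let Δ : H →+* H ⊗[k] H := (Bialgebra.comulAlgHom k H : H →+* H ⊗[k] H)
  let inl : H →+* H ⊗[k] H :=
    ((Algebra.TensorProduct.includeLeft : H →ₐ[k] H ⊗[k] H) : H →+* H ⊗[k] H)
  let inr : H →+* H ⊗[k] H :=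
    ((Algebra.TensorProduct.includeRight : H →ₐ[k] H ⊗[k] H) : H →+* H ⊗[k] H)
  let s := m.map (HopfAlgebra.antipode k)
  have hΔ : m.map Δ = m.map inl * m.map inr := by
    ext i j
    simp [Δ, inl, inr, Matrix.mul_apply, hm.comul]
  have hleft : s.map Δ * m.map Δ = 1 := by
    rw [← Matrix.map_mul, hm.map_antipode_mul, Matrix.map_one _ (map_zero Δ) (map_one Δ)]
  have hright : m.map Δ * (s.map inr * s.map inl) = 1 := by
    rw [hΔ, mul_assoc, ← mul_assoc (m.map inr), ← Matrix.map_mul, hm.mul_map_antipode,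
      Matrix.map_one _ (map_zero inr) (map_one inr), one_mul, ← Matrix.map_mul,
      hm.mul_map_antipode, Matrix.map_one _ (map_zero inl) (map_one inl)]
  have h := congrArg (fun t : Matrix ι ι (H ⊗[k] H) => t i j) (left_inv_eq_right_inv hleft hright)
  simpa [Δ, inl, inr, s, Matrix.mul_apply] using h

/-- Every finite-dimensional subcoalgebra contains the entries of a comatrix of size equal to its
dimension. -/
theorem IsSubcoalgebra.exists_isComatrix [FiniteDimensional k H] {D : Submodule k H}
    (hD : IsSubcoalgebra k H D) :
    ∃ m : Matrix (Fin (Module.finrank k D)) (Fin (Module.finrank k D)) H,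
      IsComatrix (k := k) m ∧ ∀ i j, m i j ∈ D := by
  let e := Module.finBasis k D
  obtain ⟨p, hp⟩ := D.subtype.exists_leftInverse_of_injective D.ker_subtype
  let f : Fin (Module.finrank k D) → H →ₗ[k] k := fun l => e.coord l ∘ₗ p
  have hf : ∀ l j, f l (e j : H) = if j = l then 1 else 0 := by
    intro l j
    have h := LinearMap.congr_fun hp (e j)
    simp only [LinearMap.comp_apply, Submodule.subtype_apply, LinearMap.id_apply] at h
    simp [f, h, Finsupp.single_apply]
  have hex : ∀ i, ∃ m : Fin (Module.finrank k D) → D,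
      Coalgebra.comul (R := k) (e i : H) = ∑ j, (m j : H) ⊗ₜ[k] (e j : H) := by
    intro i
    obtain ⟨t, ht⟩ := hD (e i) (e i).2
    obtain ⟨m, rfl⟩ := exists_sum_tmul_basis e t
    exact ⟨m, by simp [← ht]⟩
  choose m hm using hex
  have hslice : ∀ (j : Fin (Module.finrank k D)) (t : H ⊗[k] H) (x : H),
      ((TensorProduct.rid k H).toLinearMap ∘ₗ (f j).lTensor H).lTensor H
        (TensorProduct.assoc k H H H (t ⊗ₜ x)) = f j x • t := by
    intro j t x
    induction t with
    | zero => simp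
    | add a b ha hb => rw [add_tmul, map_add, map_add, ha, hb, smul_add]
    | tmul a b => simp
  refine ⟨fun i j => m i j, ⟨fun i j => ?_, fun i j => ?_⟩, fun i j => (m i j).2⟩
  · have h := Coalgebra.coassoc_apply (R := k) (e i : H)
    rw [hm] at h
    have h' := congrArg
      (((TensorProduct.rid k H).toLinearMap ∘ₗ (f j).lTensor H).lTensor H) h
    simp only [map_sum, LinearMap.rTensor_tmul, hslice, hf] at h'
    simpa [hm, hf] using h'
  · have h := Coalgebra.rTensor_counit_comul (R := k) (e i : H)
    rw [hm] at h
    have h' := congrArg (fun t => f j (TensorProduct.lid k H t)) h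
    simpa [hf, Matrix.one_apply] using h'

theorem IsSubcoalgebra.mul {C D : Submodule k H} (hC : IsSubcoalgebra k H C)
    (hD : IsSubcoalgebra k H D) : IsSubcoalgebra k H (C * D) := by
  intro x hx
  induction hx using Submodule.mul_induction_on' with
  | add x _ y _ hx hy => rw [map_add]; exact Submodule.add_mem _ hx hy
  | mem_mul_mem c hc d hd =>
    rw [Bialgebra.comul_mul]
    refine map_mem_of_mem_range_map (LinearMap.mulRight k (Coalgebra.comul (R := k) d))
      (fun x hx y hy => ?_) (hC c hc)
    refine map_mem_of_mem_range_map (LinearMap.mulLeft k (x ⊗ₜ[k] y))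
      (fun x' hx' y' hy' => ?_) (hD d hd)
    rw [LinearMap.mulLeft_apply, Algebra.TensorProduct.tmul_mul_tmul]
    exact tmul_mem_range_map (Submodule.mul_mem_mul hx hx') (Submodule.mul_mem_mul hy hy')

theorem IsSubcoalgebra.inf [FiniteDimensional k H] {C D : Submodule k H}
    (hC : IsSubcoalgebra k H C) (hD : IsSubcoalgebra k H D) : IsSubcoalgebra k H (C ⊓ D) := by
  have hl : ∀ {E : Submodule k H}, IsSubcoalgebra k H E → ∀ x ∈ E, ∀ f : H →ₗ[k] k,
      TensorProduct.rid k H (f.lTensor H (Coalgebra.comul (R := k) x)) ∈ E := fun hE x hx f =>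
    map_mem_of_mem_range_map ((TensorProduct.rid k H).toLinearMap ∘ₗ f.lTensor H)
      (fun a ha b _ => Submodule.smul_mem _ _ ha) (hE x hx)
  have hr : ∀ {E : Submodule k H}, IsSubcoalgebra k H E → ∀ x ∈ E, ∀ f : H →ₗ[k] k,
      TensorProduct.lid k H (f.rTensor H (Coalgebra.comul (R := k) x)) ∈ E := fun hE x hx f =>
    map_mem_of_mem_range_map ((TensorProduct.lid k H).toLinearMap ∘ₗ f.rTensor H)
      (fun a _ b hb => Submodule.smul_mem _ _ hb) (hE x hx)
  intro x hx
  exact mem_range_map_of_slices (fun f => ⟨hl hC x hx.1 f, hl hD x hx.2 f⟩)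
    (fun f => ⟨hr hC x hx.1 f, hr hD x hx.2 f⟩)

theorem IsComatrix.isSubcoalgebra_span_antipode {m : Matrix ι ι H}
    (hm : IsComatrix (k := k) m) :
    IsSubcoalgebra k H
      (Submodule.span k (Set.range fun a : ι × ι => HopfAlgebra.antipode k (m a.1 a.2))) := by
  intro x hx
  induction hx using Submodule.span_induction with
  | zero => simp
  | add x y _ _ hx hy => rw [map_add]; exact Submodule.add_mem _ hx hy
  | smul c x _ hx => rw [map_smul]; exact Submodule.smul_mem _ _ hx
  | mem x hx =>
    obtain ⟨a, rfl⟩ := hx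
    rw [hm.comul_antipode]
    exact Submodule.sum_mem _ fun l _ => tmul_mem_range_map
      (Submodule.subset_span ⟨(l, a.2), rfl⟩) (Submodule.subset_span ⟨(a.1, l), rfl⟩)

theorem IsComatrix.isCocomm_trace {m : Matrix ι ι H} (hm : IsComatrix (k := k) m) :
    IsCocomm k H m.trace := by
  simp only [IsCocomm, Matrix.trace, Matrix.diag_apply, map_sum, hm.comul, TensorProduct.comm_tmul]
  exact Finset.sum_comm

/-- Let `X` be a subcoalgebra stable under right multiplication by `K`, and let the `z b` span a
right coideal with coefficient comatrix `m`. If `z b * Λ ∈ X` for all `b`, then `z b ∈ X`. -/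
theorem IsComatrix.mem_of_mul_integral_mem {K : Subalgebra k H} (hK : IsHopfSubalgebra k H K)
    {Λ : H} (hΛ : IsIdempotentIntegral k H K Λ) {X : Submodule k H} (hX : IsSubcoalgebra k H X)
    (hXK : ∀ x ∈ X, ∀ a ∈ K, x * a ∈ X) {m : Matrix ι ι H} (hm : IsComatrix (k := k) m)
    {z : ι → H} (hz : ∀ b, Coalgebra.comul (R := k) (z b) = ∑ c, z c ⊗ₜ[k] m c b)
    (hzΛ : ∀ b, z b * Λ ∈ X) (b : ι) : z b ∈ X := by
  obtain ⟨p, hp⟩ := K.toSubmodule.subtype.exists_leftInverse_of_injective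
    K.toSubmodule.ker_subtype
  let ψ : ι → H ⊗[k] H →ₗ[k] H := fun c => LinearMap.mul' k H ∘ₗ
    (K.toSubmodule.subtype ∘ₗ p ∘ₗ LinearMap.mulRight k (m c b) ∘ₗ
      HopfAlgebra.antipode k).lTensor H
  have hψ : ∀ c x y, ψ c (x ⊗ₜ y) = x * (p (HopfAlgebra.antipode k y * m c b) : H) :=
    fun c x y => rfl
  have hpK : ∀ a ∈ K, (p a : H) = a := fun a ha =>
    congrArg Subtype.val (LinearMap.congr_fun hp ⟨a, ha⟩)
  have hsum : ∑ c, ψ c (Coalgebra.comul (R := k) (z c * Λ)) = z b := by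
    obtain ⟨t, ht⟩ := hK.1 Λ hΛ.1
    have key : ∀ s : K.toSubmodule ⊗[k] K.toSubmodule,
        ∑ c, ψ c (Coalgebra.comul (R := k) (z c) *
          TensorProduct.map K.toSubmodule.subtype K.toSubmodule.subtype s) =
        z b * LinearMap.mul' k H ((HopfAlgebra.antipode k).lTensor H
          (TensorProduct.map K.toSubmodule.subtype K.toSubmodule.subtype s)) := by
      intro s
      induction s with
      | zero => simp
      | add s s' hs hs' => simp only [map_add, mul_add, Finset.sum_add_distrib, hs, hs']
      | tmul x y =>
        have hinv : ∀ d, ∑ c, HopfAlgebra.antipode k (m d c) * m c b = (1 : Matrix ι ι H) d b :=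
          fun d => congrArg (fun t : Matrix ι ι H => t d b) hm.map_antipode_mul
        simp only [hz, Finset.sum_mul, map_sum, TensorProduct.map_tmul, Submodule.subtype_apply,
          Algebra.TensorProduct.tmul_mul_tmul, hψ, HopfAlgebra.antipode_mul_antidistrib,
          LinearMap.lTensor_tmul, LinearMap.mul'_apply]
        rw [Finset.sum_comm]
        simp only [mul_assoc, ← Finset.mul_sum]
        simp only [← AddSubmonoidClass.coe_finsetSum, ← map_sum, ← Finset.mul_sum, hinv]
        rw [Finset.sum_eq_single b]
        · rw [Matrix.one_apply_eq, mul_one, hpK _ (hK.2 _ y.2)]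
        · intro d _ hd
          rw [Matrix.one_apply_ne hd]
          simp
        · simp
    simp only [Bialgebra.comul_mul]
    rw [← ht, key, ht, HopfAlgebra.mul_antipode_lTensor_comul_apply, hΛ.2.1, map_one, mul_one]
  rw [← hsum]
  refine Submodule.sum_mem _ fun c _ => map_mem_of_mem_range_map (ψ c) (fun x hx y _ => ?_)
    (hX _ (hzΛ c))
  rw [hψ]
  exact hXK x hx _ (p _).2

/-- The functionals on `H` vanishing on `X` and invariant under right translation by `K`. -/
def invariantAnnihilator (K : Subalgebra k H) (X : Submodule k H) : Submodule k (H →ₗ[k] k) where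
  carrier := {f | (∀ x ∈ X, f x = 0) ∧
    ∀ h, ∀ a ∈ K, f (h * a) = f h * Coalgebra.counit (R := k) a}
  add_mem' {f g} hf hg := ⟨fun x hx => by simp [hf.1 x hx, hg.1 x hx], fun h a ha => by
    simp [hf.2 h a ha, hg.2 h a ha, add_mul]⟩
  zero_mem' := by simp
  smul_mem' c f hf := ⟨fun x hx => by simp [hf.1 x hx], fun h a ha => by
    simp [hf.2 h a ha, mul_assoc]⟩

theorem convolution_mem_invariantAnnihilator {K : Subalgebra k H} (hK : IsHopfSubalgebra k H K)
    {X : Submodule k H} (hX : IsSubcoalgebra k H X) {f g : H →ₗ[k] k}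
    (hf : f ∈ invariantAnnihilator K X) (hg : g ∈ invariantAnnihilator K X) :
    LinearMap.mul' k k ∘ₗ TensorProduct.map f g ∘ₗ Coalgebra.comul ∈
      invariantAnnihilator K X := by
  refine ⟨fun x hx => ?_, fun h a ha => ?_⟩
  · exact (Submodule.mem_bot k).mp <| map_mem_of_mem_range_map (N := ⊥)
      (LinearMap.mul' k k ∘ₗ TensorProduct.map f g)
      (fun x hx y _ => by simp [hf.1 x hx]) (hX x hx)
  · have key : ∀ s : H ⊗[k] H, ∀ t : K.toSubmodule ⊗[k] K.toSubmodule,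
        LinearMap.mul' k k (TensorProduct.map f g
          (s * TensorProduct.map K.toSubmodule.subtype K.toSubmodule.subtype t)) =
        LinearMap.mul' k k (TensorProduct.map f g s) *
          LinearMap.mul' k k (TensorProduct.map Coalgebra.counit Coalgebra.counit
            (TensorProduct.map K.toSubmodule.subtype K.toSubmodule.subtype t)) := by
      intro s t
      induction t with
      | zero => simp
      | add t t' ht ht' => simp only [map_add, mul_add, ht, ht']
      | tmul x y =>
        induction s with
        | zero => simp
        | add s s' hs hs' => simp only [map_add, add_mul, hs, hs']
        | tmul u v =>
          have hx := hf.2 u x x.2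
          have hy := hg.2 v y y.2
          simp [hx, hy]
          ring
    obtain ⟨t, ht⟩ := hK.1 a ha
    have hcounit : LinearMap.mul' k k (TensorProduct.map Coalgebra.counit Coalgebra.counit
        (Coalgebra.comul (R := k) a)) = Coalgebra.counit (R := k) a := by
      rw [← LinearMap.lTensor_comp_rTensor, LinearMap.comp_apply,
        Coalgebra.rTensor_counit_comul]
      simp
    simp only [LinearMap.comp_apply, Bialgebra.comul_mul]
    rw [← hcounit, ← ht, key]

/-- If every invariant functional vanishing on `X` has trace zero on the comatrix `m`, then some
nonzero combination of the rows of `m` has all its entries in `X`. -/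
theorem IsComatrix.exists_vecMul_mem [CharZero k] [Nonempty ι] {K : Subalgebra k H}
    (hK : IsHopfSubalgebra k H K) {Λ : H} (hΛ : IsIdempotentIntegral k H K Λ) {X : Submodule k H}
    (hX : IsSubcoalgebra k H X) (hXK : ∀ x ∈ X, ∀ a ∈ K, x * a ∈ X) {m : Matrix ι ι H}
    (hm : IsComatrix (k := k) m) (htr : ∀ f ∈ invariantAnnihilator K X, f m.trace = 0) :
    ∃ w : ι → k, w ≠ 0 ∧ ∀ b, ∑ a, w a • m a b ∈ X := by
  let Φ : (H →ₗ[k] k) →ₗ[k] Module.End k (ι → k) :=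
    { toFun := fun f => Matrix.toLin' (m.map f).transpose
      map_add' := fun f g => by rw [← map_add]; rfl
      map_smul' := fun c f => by rw [← map_smul]; rfl }
  obtain ⟨w, hw, hJ⟩ := exists_ne_zero_of_trace_eq_zero_of_mul_mem
    ((invariantAnnihilator K X).map Φ) (by
      rintro _ ⟨f, hf, rfl⟩ _ ⟨g, hg, rfl⟩
      refine ⟨_, convolution_mem_invariantAnnihilator hK hX hg hf, ?_⟩
      change Matrix.toLin' _ = Matrix.toLin' _ * Matrix.toLin' _
      rw [Module.End.mul_eq_comp, ← Matrix.toLin'_mul, ← Matrix.transpose_mul]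
      congr 2
      ext a b
      simp [Matrix.mul_apply, hm.comul]) (by
      rintro _ ⟨f, hf, rfl⟩
      have h := htr f hf
      change LinearMap.trace k _ (Matrix.toLin' _) = 0
      rw [Matrix.trace_toLin'_eq, Matrix.trace_transpose, ← h]
      simp [Matrix.trace])
  refine ⟨w, hw, hm.mem_of_mul_integral_mem hK hΛ hX hXK (fun b => ?_) (fun b => ?_)⟩
  · simp only [map_sum, map_smul, hm.comul, sum_tmul, Finset.smul_sum, smul_tmul']
    exact Finset.sum_comm
  by_contra hb
  obtain ⟨g, hg, hgX⟩ := Submodule.exists_le_ker_of_notMem hb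
  apply hg
  have hgΛ : g ∘ₗ LinearMap.mulRight k Λ ∈ invariantAnnihilator K X := by
    refine ⟨fun x hx => hgX (hXK x hx Λ hΛ.1), fun h a ha => ?_⟩
    simp [mul_assoc, (hΛ.2.2 a ha).1, mul_comm]
  have h := congrFun (hJ _ ⟨_, hgΛ, rfl⟩) b
  change Matrix.toLin' _ w b = 0 at h
  rw [← h]
  simp [Matrix.mulVec, dotProduct, Finset.sum_mul, mul_comm]

end Comatrix

section Statements

variable [FiniteDimensional k H] [IsSemisimpleRing H]

/-- Corollary 32: `ᶜK ⊆ C·K·S(C)`, where `S` is the antipode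
of `H` (so that `S(C)` is the simple subcoalgebra `C^*` dual to `C`). -/
theorem statement_11 (K : Subalgebra k H) (hK : IsHopfSubalgebra k H K)
    (Λ : H) (hΛ : IsIdempotentIntegral k H K Λ)
    (C : Submodule k H) (hC : IsSimpleSubcoalgebra k H C) :
    conjK k H K Λ C ≤
      C * K.toSubmodule * Submodule.map (HopfAlgebra.antipode (R := k) (A := H)) C := by
  refine sSup_le ?_
  rintro D ⟨hD, hDC⟩
  let X := C * K.toSubmodule
  have hX : IsSubcoalgebra k H X := hC.1.mul hK.1
  have hXK : ∀ x ∈ X, ∀ a ∈ K, x * a ∈ X := by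
    intro x hx a ha
    have h : X * K.toSubmodule = X := by
      simp only [X, mul_assoc, Subalgebra.isIdempotentElem_toSubmodule K |>.eq]
    exact h ▸ Submodule.mul_mem_mul hx ha
  have hne : ∀ {E : Submodule k H}, E ≠ ⊥ → Nonempty (Fin (Module.finrank k E)) := fun h =>
    Fin.pos_iff_nonempty.mp (Nat.pos_of_ne_zero fun h' => h (Submodule.finrank_eq_zero.mp h'))
  obtain ⟨m, hm, hmD⟩ := hD.1.exists_isComatrix
  obtain ⟨n, hn, hnC⟩ := hC.1.exists_isComatrix
  have := hne hD.2.1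
  have := hne hC.2.1
  have hmn := hm.mul hn
  have htraceC : n.trace ∈ C := Submodule.sum_mem _ fun i _ => hnC i i
  have htraceD : m.trace ∈ D := Submodule.sum_mem _ fun i _ => hmD i i
  have htr : ∀ f ∈ invariantAnnihilator K X,
      f (Matrix.of fun a b : _ × _ => m a.1 b.1 * n a.2 b.2).trace = 0 := by
    intro f hf
    have h : (Matrix.of fun a b : _ × _ => m a.1 b.1 * n a.2 b.2).trace = m.trace * n.trace := by
      simp [Matrix.trace, Fintype.sum_prod_type, Finset.sum_mul_sum]
    have hΛf := hf.2 (m.trace * n.trace) Λ hΛ.1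
    rw [hΛ.2.1, mul_one, mul_assoc,
      hDC _ htraceD hm.isCocomm_trace _ htraceC hn.isCocomm_trace, map_smul,
      hf.1 _ (Submodule.mul_mem_mul htraceC hΛ.1), smul_zero] at hΛf
    rw [h, ← hΛf]
  obtain ⟨w, hw, hz⟩ := hmn.exists_vecMul_mem hK hΛ hX hXK htr
  let C' := Submodule.span k (Set.range fun a : _ × _ => HopfAlgebra.antipode k (n a.1 a.2))
  have hC' : C' ≤ C.map (HopfAlgebra.antipode k) := by
    rw [Submodule.span_le]
    rintro _ ⟨a, rfl⟩
    exact ⟨_, hnC _ _, rfl⟩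
  have hv : ∀ j p, ∑ i, w (i, p) • m i j ∈ X * C' := by
    intro j p
    have hinv : ∀ q, ∑ l, n q l * HopfAlgebra.antipode k (n l p) = (1 : Matrix _ _ H) q p :=
      fun q => congrArg (fun t : Matrix _ _ H => t q p) hn.mul_map_antipode
    have h : ∑ i, w (i, p) • m i j = ∑ l, (∑ a, w a • (m a.1 j * n a.2 l)) *
        HopfAlgebra.antipode k (n l p) := by
      simp only [Finset.sum_mul, smul_mul_assoc, mul_assoc]
      rw [Finset.sum_comm]
      simp only [← Finset.smul_sum, ← Finset.mul_sum, hinv, Fintype.sum_prod_type,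
        Matrix.one_apply]
      simp
    rw [h]
    exact Submodule.sum_mem _ fun l _ =>
      Submodule.mul_mem_mul (hz (j, l)) (Submodule.subset_span ⟨(l, p), rfl⟩)
  obtain ⟨⟨j, p⟩, hjp⟩ := Function.ne_iff.mp hw
  have hne_bot : D ⊓ X * C' ≠ ⊥ := by
    intro h
    have hmem : ∑ i, w (i, p) • m i j ∈ D ⊓ X * C' :=
      ⟨Submodule.sum_mem _ fun i _ => Submodule.smul_mem _ _ (hmD i j), hv j p⟩
    rw [h, Submodule.mem_bot] at hmem
    have hε := congrArg (Coalgebra.counit (R := k)) hmem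
    simp only [map_sum, map_smul, hm.counit, Matrix.one_apply, map_zero] at hε
    exact hjp (by simpa using hε)
  have hDX := hD.2.2 _ inf_le_left
    (hD.1.inf (hX.mul hn.isSubcoalgebra_span_antipode)) hne_bot
  exact (inf_eq_left.mp hDX).trans
    (Submodule.mul_le.mpr fun x hx y hy => Submodule.mul_mem_mul hx (hC' hy))

end Statements

end

end MackeyPaper
end

section
/- Let K be a Hopf subalgebra of H and let C, D be simple subcoalgebras of H with DK = CK. Then the conjugate Hopf subalgebras coincide: {}^D K = {}^C K. -/
open TensorProduct

namespace MackeyPaper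

noncomputable section

universe v

variable (k : Type) [Field k] [CharZero k] [IsAlgClosed k]
variable (H : Type) [Ring H] [HopfAlgebra k H]

open DirectSum

section MatrixTraces

variable {F : Type*} [Field F]

/-- A linear functional on a finite product of matrix algebras which is invariant under cyclic
permutations is a linear combination of the traces of the factors. -/
theorem tracial_pi_matrix_apply {I : Type*} [Fintype I] [DecidableEq I] {d : I → ℕ}
    [∀ i, NeZero (d i)] (τ : (Π i, Matrix (Fin (d i)) (Fin (d i)) F) →ₗ[F] F)
    (hτ : ∀ X Y, τ (X * Y) = τ (Y * X)) (X : Π i, Matrix (Fin (d i)) (Fin (d i)) F) :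
    τ X = ∑ i, τ (Pi.single i (Matrix.single 0 0 1)) * (X i).trace := by
  obtain ⟨t, ht⟩ : ∃ t : I → F, ∀ i, τ (Pi.single i (Matrix.single 0 0 1)) = t i := ⟨_, fun _ => rfl⟩
  have key (i : I) (a b : Fin (d i)) : τ (Pi.single i (Matrix.single a b 1)) =
      if a = b then t i else 0 := by
    have h1 : (Pi.single i (Matrix.single a b 1) : Π i, Matrix (Fin (d i)) (Fin (d i)) F) =
        Pi.single i (Matrix.single a 0 1) * Pi.single i (Matrix.single 0 b 1) := by
      rw [← Pi.single_mul, Matrix.single_mul_single_same, one_mul]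
    rw [h1, hτ, ← Pi.single_mul]
    split_ifs with h
    · subst h; rw [Matrix.single_mul_single_same, one_mul, ht]
    · rw [Matrix.single_mul_single_of_ne _ _ _ _ (Ne.symm h), Pi.single_zero, map_zero]
  have hX : X = ∑ i, ∑ a, ∑ b, X i a b • Pi.single i (Matrix.single a b 1) := by
    conv_lhs => rw [← Finset.univ_sum_single X]
    refine Finset.sum_congr rfl fun i _ => ?_
    conv_lhs => rw [Matrix.matrix_eq_sum_single (X i)]
    simp_rw [← Pi.single_smul, Matrix.smul_single, smul_eq_mul, mul_one]
    simp only [← LinearMap.single_apply (R := F) (φ := fun i => Matrix (Fin (d i)) (Fin (d i)) F),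
      map_sum]
  simp_rw [ht]
  conv_lhs => rw [hX]
  simp only [map_sum, map_smul, key, smul_eq_mul, mul_ite, mul_zero, Finset.sum_ite_eq,
    Finset.mem_univ, if_true, Matrix.trace, Matrix.diag_apply, Finset.mul_sum]
  exact Finset.sum_congr rfl fun i _ => Finset.sum_congr rfl fun a _ => mul_comm _ _

/-- A finite-dimensional algebra over an algebraically closed field maps onto a product of matrix
algebras with nil kernel. -/
theorem exists_pi_matrix_of_isAlgClosed (F A : Type*) [Field F] [IsAlgClosed F] [Ring A]
    [Algebra F A] [FiniteDimensional F A] :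
    ∃ (n : ℕ) (d : Fin n → ℕ) (_ : ∀ i, NeZero (d i))
      (ψ : A →ₐ[F] Π i, Matrix (Fin (d i)) (Fin (d i)) F),
      Function.Surjective ψ ∧ ∀ x, ψ x = 0 → IsNilpotent x := by
  have : IsArtinianRing A := IsArtinianRing.of_finite F A
  obtain ⟨n, d, hd, ⟨e⟩⟩ :=
    IsSemisimpleRing.exists_algEquiv_pi_matrix_of_isAlgClosed F (A ⧸ Ring.jacobson A)
  refine ⟨n, d, hd, e.toAlgHom.comp (Ideal.Quotient.mkₐ F (Ring.jacobson A)),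
    e.surjective.comp (Ideal.Quotient.mkₐ_surjective F _), fun x hx => ?_⟩
  have hx' : x ∈ Ring.jacobson A := by
    have : e (Ideal.Quotient.mk _ x) = 0 := hx
    exact Ideal.Quotient.eq_zero_iff_mem.mp ((map_eq_zero_iff e e.injective).mp this)
  obtain ⟨m, hm⟩ := IsSemiprimaryRing.isNilpotent (R := A)
  refine ⟨m, ?_⟩
  have := Ideal.pow_mem_pow hx' m
  rwa [hm] at this

/-- The trace of an idempotent matrix is a natural number, vanishing only for the zero matrix. -/
theorem exists_nat_trace_eq_of_isIdempotentElem [CharZero F] {n : Type*} [Fintype n]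
    [DecidableEq n] {X : Matrix n n F} (hX : IsIdempotentElem X) :
    ∃ r : ℕ, X.trace = r ∧ (r = 0 → X = 0) := by
  have h : IsIdempotentElem (Matrix.toLin' X) := by
    rw [IsIdempotentElem, Module.End.mul_eq_comp, ← Matrix.toLin'_mul, hX.eq]
  have ht := (LinearMap.IsIdempotentElem.isProj_range _ h).trace
  rw [Matrix.trace_toLin'_eq] at ht
  refine ⟨_, ht, fun h0 => ?_⟩
  rw [h0, Nat.cast_zero, ← Matrix.trace_toLin'_eq] at ht
  simpa using (LinearMap.IsIdempotentElem.trace_eq_zero_iff h).mp ht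

end MatrixTraces

section Comatrices

/-- Product functionals separate the points of a tensor square. -/
theorem tensor_ext_of_map_eq {F H : Type*} [Field F] [AddCommGroup H] [Module F H]
    {x y : H ⊗[F] H}
    (h : ∀ f g : H →ₗ[F] F, LinearMap.mul' F F (TensorProduct.map f g x) =
      LinearMap.mul' F F (TensorProduct.map f g y)) : x = y := by
  let b := Module.Free.chooseBasis F H
  refine (b.tensorProduct b).ext_elem fun ⟨i, j⟩ => ?_
  have key (z : H ⊗[F] H) : (b.tensorProduct b).repr z (i, j) =
      LinearMap.mul' F F (TensorProduct.map (b.coord i) (b.coord j) z) := by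
    induction z with
    | zero => simp
    | add z w hz hw => simp [hz, hw]
    | tmul z w => simp [Module.Basis.tensorProduct_repr_tmul_apply, mul_comm]
  rw [key, key, h]

variable {F H : Type*} [Field F] [Ring H]

section Coalgebra

variable {n : Type*} [Fintype n] [DecidableEq n]

/-- A matrix `u` over a coalgebra which is comultiplicative, `Δ(u a b) = ∑ c, u a c ⊗ u c b`, and
counital: the matrix coefficients of a finite-dimensional comodule in some basis. -/
structure IsComatrix_s13 (F : Type*) {H : Type*} [Field F] [AddCommGroup H] [Module F H]
    [Coalgebra F H] (u : Matrix n n H) : Prop where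
  comul_apply (a b : n) : Coalgebra.comul (R := F) (u a b) = ∑ c, u a c ⊗ₜ[F] u c b
  counit_apply (a b : n) : Coalgebra.counit (R := F) (u a b) = (1 : Matrix n n F) a b

variable {H : Type*} [AddCommGroup H] [Module F H] [Coalgebra F H]

/-- The representation of the convolution algebra of the dual coalgebra defined by a comatrix. -/
def IsComatrix_s13.rep {u : Matrix n n H} (hu : IsComatrix_s13 F u) :
    WithConv (H →ₗ[F] F) →ₐ[F] Matrix n n F :=
  AlgHom.ofLinearMap
    { toFun := fun f => u.map f.ofConv
      map_add' := fun f g => by ext; simp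
      map_smul' := fun c f => by ext; simp }
    (by ext a b; simp [LinearMap.convOne_def, hu.counit_apply])
    (fun f g => by ext a b; simp [LinearMap.convMul_def, hu.comul_apply, Matrix.mul_apply])

theorem IsComatrix_s13.rep_apply {u : Matrix n n H} (hu : IsComatrix_s13 F u)
    (f : WithConv (H →ₗ[F] F)) (a b : n) : hu.rep f a b = f.ofConv (u a b) := rfl

theorem IsComatrix_s13.trace_rep {u : Matrix n n H} (hu : IsComatrix_s13 F u)
    (f : WithConv (H →ₗ[F] F)) : (hu.rep f).trace = f.ofConv u.trace := by
  simp [Matrix.trace, hu.rep_apply]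

theorem IsComatrix_s13.counit_trace {u : Matrix n n H} (hu : IsComatrix_s13 F u) :
    Coalgebra.counit (R := F) u.trace = Fintype.card n := by
  simp [Matrix.trace, hu.counit_apply]

/-- Every finite-dimensional matrix representation of the convolution algebra of a
finite-dimensional coalgebra comes from a comatrix. -/
theorem exists_isComatrix_rep_eq [FiniteDimensional F H]
    (φ : WithConv (H →ₗ[F] F) →ₐ[F] Matrix n n F) :
    ∃ (u : Matrix n n H) (hu : IsComatrix_s13 F u), hu.rep = φ := by
  have hex (a b : n) : ∃ x : H, ∀ f : H →ₗ[F] F, f x = φ (WithConv.toConv f) a b := by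
    let l : Module.Dual F (Module.Dual F H) :=
      Matrix.entryLinearMap F F a b ∘ₗ φ.toLinearMap ∘ₗ
        (WithConv.linearEquiv F (H →ₗ[F] F)).symm.toLinearMap
    refine ⟨(Module.evalEquiv F H).symm l, fun f => ?_⟩
    rw [Module.apply_evalEquiv_symm_apply]
    rfl
  choose u hu using hex
  have hu' : IsComatrix_s13 F (Matrix.of u) := by
    refine ⟨fun a b => tensor_ext_of_map_eq fun f g => ?_, fun a b => ?_⟩
    · have := hu a b (WithConv.toConv f * WithConv.toConv g).ofConv
      rw [WithConv.toConv_ofConv, map_mul, Matrix.mul_apply] at this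
      simpa [LinearMap.convMul_def, ← hu] using this
    · have := hu a b (1 : WithConv (H →ₗ[F] F)).ofConv
      rw [WithConv.toConv_ofConv, map_one] at this
      simpa [LinearMap.convOne_def] using this
  exact ⟨Matrix.of u, hu', by ext f a b; exact hu a b f.ofConv⟩

/-- The matrix of structure constants of a left coideal with basis `b` is a comatrix. -/
theorem isComatrix_of_comul_eq_sum {b : n → H} {β : n → H →ₗ[F] F} {u : Matrix n n H}
    (hβ : ∀ i j, β i (b j) = (1 : Matrix n n F) i j)
    (hu : ∀ j, Coalgebra.comul (R := F) (b j) = ∑ i, u j i ⊗ₜ[F] b i) : IsComatrix_s13 F u where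
  comul_apply j i := by
    have h := Coalgebra.coassoc_apply (R := F) (b j)
    rw [hu] at h
    have h' := congrArg (TensorProduct.rid F (H ⊗[F] H) ∘
      (TensorProduct.map LinearMap.id (β i)) ∘ (TensorProduct.assoc F H H H).symm) h
    simpa [hu, TensorProduct.tmul_sum, hβ, Matrix.one_apply] using h'
  counit_apply j i := by
    have h := Coalgebra.rTensor_counit_comul (R := F) (b j)
    rw [hu] at h
    have h' := congrArg (β i ∘ TensorProduct.lid F H) h
    simpa [hβ, Matrix.one_apply, eq_comm] using h'

end Coalgebra

section Bialgebra

/-- The Kronecker product of two comatrices, corresponding to the tensor product of comodules. -/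
theorem IsComatrix_s13.kronecker [Bialgebra F H] {m n : Type*} [Fintype m] [DecidableEq m] [Fintype n]
    [DecidableEq n] {u : Matrix m m H} {v : Matrix n n H} (hu : IsComatrix_s13 F u)
    (hv : IsComatrix_s13 F v) : IsComatrix_s13 F (Matrix.kroneckerMap (· * ·) u v) where
  comul_apply a b := by
    simp [Bialgebra.comul_mul, hu.comul_apply, hv.comul_apply, Finset.sum_mul_sum,
      Fintype.sum_prod_type]
  counit_apply a b := by
    simp [Bialgebra.counit_mul, hu.counit_apply, hv.counit_apply, Matrix.one_apply, Prod.ext_iff,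
      ite_and]
    split_ifs <;> rfl

theorem trace_kroneckerMap_mul {m n : Type*} [Fintype m] [Fintype n] (u : Matrix m m H)
    (v : Matrix n n H) : (Matrix.kroneckerMap (· * ·) u v).trace = u.trace * v.trace := by
  simp [Matrix.trace, Finset.sum_mul_sum, Fintype.sum_prod_type]

end Bialgebra

end Comatrices

section IrreducibleSystem

variable {F H : Type*} [Field F] [AddCommGroup H] [Module F H] [Coalgebra F H]
  {I : Type*} [Fintype I] {d : I → ℕ} [∀ i, NeZero (d i)]

/-- A complete system of irreducible comatrices `v i`, together with primitive idempotents `e i` of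
the dual convolution algebra, `e i` acting as the matrix unit `E₀₀` on the `i`-th comodule and as
zero on all others. -/
structure IsIrreducibleSystem (v : Π i, Matrix (Fin (d i)) (Fin (d i)) H)
    (e : I → WithConv (H →ₗ[F] F)) : Prop where
  isComatrix (i : I) : IsComatrix_s13 F (v i)
  isIdempotentElem (i : I) : IsIdempotentElem (e i)
  rep_self (i : I) : (isComatrix i).rep (e i) = Matrix.single 0 0 1
  rep_of_ne {i j : I} (h : i ≠ j) : (isComatrix i).rep (e j) = 0
  rep_surjective (i : I) : Function.Surjective (isComatrix i).rep
  isNilpotent (f : WithConv (H →ₗ[F] F)) (hf : ∀ i, (isComatrix i).rep f = 0) : IsNilpotent f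
  eq_sum_trace (x : H)
    (hx : ∀ f g : WithConv (H →ₗ[F] F), (f * g).ofConv x = (g * f).ofConv x)
    (hx' : ∀ f, (∀ i, (isComatrix i).rep f = 0) → f.ofConv x = 0) :
    x = ∑ i, (e i).ofConv x • (v i).trace

theorem exists_isIrreducibleSystem (F H : Type*) [Field F] [IsAlgClosed F] [AddCommGroup H]
    [Module F H] [Coalgebra F H] [FiniteDimensional F H] :
    ∃ (n : ℕ) (d : Fin n → ℕ) (_ : ∀ i, NeZero (d i))
      (v : Π i, Matrix (Fin (d i)) (Fin (d i)) H) (e : Fin n → WithConv (H →ₗ[F] F)),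
      IsIrreducibleSystem v e := by
  have : FiniteDimensional F (WithConv (H →ₗ[F] F)) :=
    (WithConv.linearEquiv F (H →ₗ[F] F)).symm.finiteDimensional
  obtain ⟨n, d, hd, ψ, hψ, hnil⟩ := exists_pi_matrix_of_isAlgClosed F (WithConv (H →ₗ[F] F))
  choose v hv hvψ using fun i => exists_isComatrix_rep_eq
    ((Pi.evalAlgHom F (fun i => Matrix (Fin (d i)) (Fin (d i)) F) i).comp ψ)
  have hrep (i : Fin n) (f : WithConv (H →ₗ[F] F)) : (hv i).rep f = ψ f i := by
    rw [hvψ]; rfl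
  have hzero (f : WithConv (H →ₗ[F] F)) (hf : ∀ i, (hv i).rep f = 0) : ψ f = 0 := by
    ext1 i; rw [← hrep, hf]; rfl
  have hlift (i : Fin n) : ∃ e : WithConv (H →ₗ[F] F), IsIdempotentElem e ∧
      ψ e = Pi.single i (Matrix.single 0 0 1) := by
    refine exists_isIdempotentElem_eq_of_ker_isNilpotent ψ.toRingHom (fun x hx => hnil x hx) _
      (hψ _) ?_
    rw [IsIdempotentElem, ← Pi.single_mul, Matrix.single_mul_single_same, one_mul]
  choose e he heψ using hlift
  refine ⟨n, d, hd, v, e, hv, he, fun i => ?_, fun {i j} h => ?_, fun i X => ?_,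
    fun f hf => hnil f (hzero f hf), fun x hx hx' => ?_⟩
  · rw [hrep, heψ, Pi.single_eq_same]
  · rw [hrep, heψ, Pi.single_eq_of_ne h]
  · obtain ⟨f, hf⟩ := hψ (Pi.single i X)
    exact ⟨f, by rw [hrep, hf, Pi.single_eq_same]⟩
  · obtain ⟨σ, hσ⟩ := ψ.toLinearMap.exists_rightInverse_of_surjective
      (LinearMap.range_eq_top.mpr hψ)
    have hψσ X : ψ (σ X) = X := LinearMap.congr_fun hσ X
    let τ : (Π i, Matrix (Fin (d i)) (Fin (d i)) F) →ₗ[F] F :=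
      LinearMap.applyₗ x ∘ₗ (WithConv.linearEquiv F (H →ₗ[F] F)).toLinearMap ∘ₗ σ
    have hτψ (f : WithConv (H →ₗ[F] F)) : τ (ψ f) = f.ofConv x := by
      have := hx' (σ (ψ f) - f) fun i => by rw [hrep, map_sub, hψσ, sub_self]; rfl
      exact sub_eq_zero.mp this
    have hτ X Y : τ (X * Y) = τ (Y * X) := by
      obtain ⟨f, rfl⟩ := hψ X
      obtain ⟨g, rfl⟩ := hψ Y
      rw [← map_mul, ← map_mul, hτψ, hτψ, hx]
    rw [← sub_eq_zero, ← Module.forall_dual_apply_eq_zero_iff F]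
    intro f
    have := tracial_pi_matrix_apply τ hτ (ψ (WithConv.toConv f))
    simp_rw [hτψ, ← heψ, hτψ, ← hrep, IsComatrix_s13.trace_rep] at this
    rw [map_sub, sub_eq_zero, map_sum]
    simpa using this

namespace IsIrreducibleSystem

variable {v : Π i, Matrix (Fin (d i)) (Fin (d i)) H} {e : I → WithConv (H →ₗ[F] F)}

theorem apply_trace_self (h : IsIrreducibleSystem v e) (i : I) :
    (e i).ofConv (v i).trace = 1 := by
  rw [← (h.isComatrix i).trace_rep, h.rep_self, Matrix.trace_single_eq_same]

theorem apply_trace_of_ne (h : IsIrreducibleSystem v e) {i j : I} (hij : i ≠ j) :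
    (e j).ofConv (v i).trace = 0 := by
  rw [← (h.isComatrix i).trace_rep, h.rep_of_ne hij, Matrix.trace_zero]

theorem apply_trace [DecidableEq I] (h : IsIrreducibleSystem v e) (i j : I) :
    (e j).ofConv (v i).trace = if i = j then 1 else 0 := by
  split_ifs with hij
  · rw [hij, h.apply_trace_self]
  · exact h.apply_trace_of_ne hij

/-- The multiplicities of the irreducible comodules in the comodule defined by a comatrix. -/
theorem exists_nat_multiplicity [CharZero F] (h : IsIrreducibleSystem v e) {n : Type*}
    [Fintype n] [DecidableEq n] {u : Matrix n n H} (hu : IsComatrix_s13 F u) :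
    ∃ r : I → ℕ, u.trace = ∑ i, (r i : F) • (v i).trace ∧
      ∀ i, r i = 0 → hu.rep (e i) = 0 := by
  choose r hr hr' using fun i =>
    exists_nat_trace_eq_of_isIdempotentElem ((h.isIdempotentElem i).map hu.rep)
  refine ⟨r, ?_, hr'⟩
  simp_rw [← hr, hu.trace_rep]
  refine h.eq_sum_trace _ (fun f g => ?_) (fun f hf => ?_)
  · rw [← hu.trace_rep, ← hu.trace_rep, map_mul, map_mul, Matrix.trace_mul_comm]
  · rw [← hu.trace_rep]
    exact (Matrix.isNilpotent_trace_of_isNilpotent ((h.isNilpotent f hf).map hu.rep)).eq_zero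

end IsIrreducibleSystem

end IrreducibleSystem

section RegularComatrix

variable {F H : Type*} [Field F] [Ring H]

/-- The operator `x ↦ f(x₁) x₂` defined by a functional `f` on a coalgebra. -/
def coregular {F H : Type*} [Field F] [AddCommGroup H] [Module F H] [Coalgebra F H]
    (f : H →ₗ[F] F) : H →ₗ[F] H :=
  TensorProduct.lid F H ∘ₗ f.rTensor H ∘ₗ Coalgebra.comul

theorem exists_isComatrix_trace_coregular (F H : Type*) [Field F] [AddCommGroup H] [Module F H]
    [Coalgebra F H] [FiniteDimensional F H] :
    ∃ (n : ℕ) (u : Matrix (Fin n) (Fin n) H) (hu : IsComatrix_s13 F u),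
      (∀ f : H →ₗ[F] F, f u.trace = LinearMap.trace F H (coregular f)) ∧
      ∀ f, hu.rep f = 0 → f = 0 := by
  let b := Module.finBasis F H
  have hex (j) : ∃ w : Fin (Module.finrank F H) → H,
      Coalgebra.comul (R := F) (b j) = ∑ i, w i ⊗ₜ[F] b i := by
    obtain ⟨w, hw⟩ := TensorProduct.eq_repr_basis_right b (Coalgebra.comul (R := F) (b j))
    exact ⟨w, by rw [← hw, Finsupp.sum_fintype]; simp⟩
  choose u hu using hex
  have huc : IsComatrix_s13 F (Matrix.of u) :=
    isComatrix_of_comul_eq_sum (b := b) (β := fun i => b.coord i)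
      (fun i j => by simp [Matrix.one_apply, Finsupp.single_apply, eq_comm]) hu
  refine ⟨_, Matrix.of u, huc, fun f => ?_, fun f hf => ?_⟩
  · rw [LinearMap.trace_eq_matrix_trace F b]
    simp [Matrix.trace, LinearMap.toMatrix_apply, coregular, hu, Finsupp.single_apply]
  · have hf' (j i) : f.ofConv (u j i) = 0 := congrFun (congrFun hf j) i
    suffices f.ofConv = 0 from WithConv.ofConv_injective this
    refine b.ext fun j => ?_
    have := congrArg (TensorProduct.rid F H) (Coalgebra.lTensor_counit_comul (R := F) (b j))
    rw [hu] at this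
    simp only [map_sum, LinearMap.lTensor_tmul, TensorProduct.rid_tmul, one_smul] at this
    rw [← this]
    simp [hf']

variable [HopfAlgebra F H] {n : Type*} [Fintype n] [DecidableEq n]

theorem IsComatrix_s13.sum_mul_antipode {v : Matrix n n H} (hv : IsComatrix_s13 F v) (a b : n) :
    ∑ c, v a c * HopfAlgebra.antipode F (v c b) = if a = b then 1 else 0 := by
  have := HopfAlgebra.mul_antipode_lTensor_comul_apply (R := F) (v a b)
  rw [hv.comul_apply, hv.counit_apply] at this
  simpa [Matrix.one_apply, apply_ite (algebraMap F H)] using this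

theorem IsComatrix_s13.sum_antipode_mul {v : Matrix n n H} (hv : IsComatrix_s13 F v) (a b : n) :
    ∑ c, HopfAlgebra.antipode F (v a c) * v c b = if a = b then 1 else 0 := by
  have := HopfAlgebra.mul_antipode_rTensor_comul_apply (R := F) (v a b)
  rw [hv.comul_apply, hv.counit_apply] at this
  simpa [Matrix.one_apply, apply_ite (algebraMap F H)] using this

theorem IsComatrix_s13.coregular_comp_mulRight {v : Matrix n n H} (hv : IsComatrix_s13 F v)
    (f : H →ₗ[F] F) (a b : n) :
    coregular (f ∘ₗ LinearMap.mulRight F (v a b)) =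
      ∑ c, LinearMap.mulRight F (HopfAlgebra.antipode F (v c b)) ∘ₗ coregular f ∘ₗ
        LinearMap.mulRight F (v a c) := by
  ext x
  have hx := (Coalgebra.Repr.arbitrary F x).eq
  have h (c : n) : coregular f (x * v a c) = ∑ i ∈ (Coalgebra.Repr.arbitrary F x).index, ∑ d,
      f ((Coalgebra.Repr.arbitrary F x).left i * v a d) •
        ((Coalgebra.Repr.arbitrary F x).right i * v d c) := by
    simp [coregular, Bialgebra.comul_mul, hv.comul_apply, ← hx, Finset.sum_mul_sum]
  simp only [LinearMap.sum_apply, LinearMap.comp_apply, LinearMap.mulRight_apply, h]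
  simp_rw [Finset.sum_mul, smul_mul_assoc, mul_assoc]
  rw [Finset.sum_comm]
  have h' (i) : ∑ c, ∑ d, f ((Coalgebra.Repr.arbitrary F x).left i * v a d) •
      ((Coalgebra.Repr.arbitrary F x).right i *
        (v d c * HopfAlgebra.antipode F (v c b))) =
      f ((Coalgebra.Repr.arbitrary F x).left i * v a b) •
        (Coalgebra.Repr.arbitrary F x).right i := by
    rw [Finset.sum_comm]
    simp [← Finset.smul_sum, ← Finset.mul_sum, hv.sum_mul_antipode]
  simp_rw [h']
  simp [coregular, ← hx]

/-- Tensoring the regular comodule with a comodule of dimension `m` yields `m` copies of the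
regular comodule, on the level of characters. -/
theorem IsComatrix_s13.trace_coregular_comp_mulRight_trace [FiniteDimensional F H] {v : Matrix n n H}
    (hv : IsComatrix_s13 F v) (f : H →ₗ[F] F) :
    LinearMap.trace F H (coregular (f ∘ₗ LinearMap.mulRight F v.trace)) =
      Fintype.card n * LinearMap.trace F H (coregular f) := by
  have h1 : coregular (f ∘ₗ LinearMap.mulRight F v.trace) =
      ∑ a, coregular (f ∘ₗ LinearMap.mulRight F (v a a)) := by
    ext x
    have hx := (Coalgebra.Repr.arbitrary F x).eq
    simp [coregular, ← hx, Matrix.trace, Finset.mul_sum, Finset.sum_smul]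
    rw [Finset.sum_comm]
  have h2 (c : n) : ∑ a, LinearMap.mulRight F (v a c) *
      LinearMap.mulRight F (HopfAlgebra.antipode F (v c a)) = 1 := by
    ext x
    simp [mul_assoc, ← Finset.mul_sum, hv.sum_antipode_mul]
  rw [h1, map_sum]
  simp_rw [hv.coregular_comp_mulRight, map_sum]
  rw [Finset.sum_comm]
  have h3 (a c : n) : LinearMap.trace F H
      (LinearMap.mulRight F (HopfAlgebra.antipode F (v c a)) ∘ₗ coregular f ∘ₗ
        LinearMap.mulRight F (v a c)) =
      LinearMap.trace F H (coregular f * (LinearMap.mulRight F (v a c) *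
        LinearMap.mulRight F (HopfAlgebra.antipode F (v c a)))) := by
    rw [LinearMap.trace_comp_comm', LinearMap.comp_assoc]
    rfl
  have h4 (c : n) : ∑ a, LinearMap.trace F H (coregular f * (LinearMap.mulRight F (v a c) *
      LinearMap.mulRight F (HopfAlgebra.antipode F (v c a)))) =
      LinearMap.trace F H (coregular f) := by
    rw [← map_sum, ← Finset.mul_sum, h2, mul_one]
  simp_rw [h3, h4]
  simp

/-- The regular character `χ` of a finite-dimensional Hopf algebra absorbs characters. -/
theorem exists_regular_comatrix (F H : Type*) [Field F] [Ring H] [HopfAlgebra F H]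
    [FiniteDimensional F H] :
    ∃ (m : ℕ) (u : Matrix (Fin m) (Fin m) H) (hu : IsComatrix_s13 F u),
      (∀ f, hu.rep f = 0 → f = 0) ∧
      ∀ {n : ℕ} {v : Matrix (Fin n) (Fin n) H}, IsComatrix_s13 F v →
        u.trace * v.trace = (n : F) • u.trace := by
  obtain ⟨m, u, hu, htr, hinj⟩ := exists_isComatrix_trace_coregular F H
  refine ⟨m, u, hu, hinj, fun {n v} hv => ?_⟩
  rw [← sub_eq_zero, ← Module.forall_dual_apply_eq_zero_iff F]
  intro f
  have h1 := htr (f ∘ₗ LinearMap.mulRight F v.trace)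
  rw [hv.trace_coregular_comp_mulRight_trace, ← htr, Fintype.card_fin] at h1
  rw [map_sub, sub_eq_zero, map_smul, smul_eq_mul, ← h1]
  rfl

end RegularComatrix

section SimpleSubcoalgebras

variable {F H : Type} [Field F] [Ring H] [HopfAlgebra F H]

/-- The span of the entries of a matrix. -/
def entrySpan (F : Type) {H : Type} [Field F] [AddCommGroup H] [Module F H] {n : Type}
    (u : Matrix n n H) : Submodule F H :=
  Submodule.span F (Set.range fun p : n × n => u p.1 p.2)

theorem apply_mem_entrySpan {n : Type} (u : Matrix n n H) (a b : n) : u a b ∈ entrySpan F u :=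
  Submodule.subset_span ⟨(a, b), rfl⟩

theorem trace_mem_entrySpan {n : Type} [Fintype n] (u : Matrix n n H) :
    u.trace ∈ entrySpan F u :=
  Submodule.sum_mem _ fun a _ => apply_mem_entrySpan u a a

theorem entrySpan_le {n : Type} {u : Matrix n n H} {U : Submodule F H} :
    entrySpan F u ≤ U ↔ ∀ a b, u a b ∈ U := by
  rw [entrySpan, Submodule.span_le, Set.range_subset_iff, Prod.forall]
  rfl

section

variable {n : Type} [Fintype n] [DecidableEq n] {u : Matrix n n H}

theorem IsComatrix_s13.isSubcoalgebra_entrySpan (hu : IsComatrix_s13 F u) :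
    IsSubcoalgebra F H (entrySpan F u) := by
  suffices entrySpan F u ≤ (LinearMap.range (TensorProduct.map (entrySpan F u).subtype
      (entrySpan F u).subtype)).comap Coalgebra.comul from fun c hc => this hc
  refine entrySpan_le.2 fun a b => ?_
  rw [Submodule.mem_comap, hu.comul_apply]
  exact Submodule.sum_mem _ fun c _ =>
    ⟨⟨u a c, apply_mem_entrySpan u a c⟩ ⊗ₜ ⟨u c b, apply_mem_entrySpan u c b⟩, by simp⟩

theorem IsComatrix_s13.apply_eq_zero_of_rep_eq_zero (hu : IsComatrix_s13 F u)
    {f : WithConv (H →ₗ[F] F)} (hf : hu.rep f = 0) {x : H} (hx : x ∈ entrySpan F u) :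
    f.ofConv x = 0 := by
  have : entrySpan F u ≤ LinearMap.ker f.ofConv :=
    entrySpan_le.2 fun a b => congrFun (congrFun hf a) b
  exact this hx

end

theorem IsSubcoalgebra.exists_isComatrix_s13 [FiniteDimensional F H] {U : Submodule F H}
    (hU : IsSubcoalgebra F H U) :
    ∃ (n : ℕ) (u : Matrix (Fin n) (Fin n) H), IsComatrix_s13 F u ∧ entrySpan F u = U := by
  let b := Module.finBasis F U
  choose β hβ using fun i => LinearMap.exists_extend (b.coord i)
  have hex (j) : ∃ w : Fin (Module.finrank F U) → U,
      Coalgebra.comul (R := F) (b j : H) = ∑ i, (w i : H) ⊗ₜ[F] (b i : H) := by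
    obtain ⟨z, hz⟩ := hU (b j) (b j).2
    obtain ⟨w, hw⟩ := TensorProduct.eq_repr_basis_right b z
    refine ⟨w, ?_⟩
    rw [← hz, ← hw, Finsupp.sum_fintype _ _ (by simp)]
    simp
  choose u hu using hex
  refine ⟨_, Matrix.of fun j i => (u j i : H),
    isComatrix_of_comul_eq_sum (b := fun i => (b i : H)) (β := β) (fun i j => ?_) hu,
    le_antisymm (entrySpan_le.2 fun a c => (u a c).2) ?_⟩
  · have := LinearMap.congr_fun (hβ i) (b j)
    simpa [Matrix.one_apply, Finsupp.single_apply, eq_comm] using this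
  · intro x hx
    have hx' : x = ∑ j, b.repr ⟨x, hx⟩ j • (b j : H) := by
      have := congrArg U.subtype (b.sum_repr ⟨x, hx⟩).symm
      simpa only [map_sum, map_smul, Submodule.subtype_apply] using this
    rw [hx']
    refine Submodule.sum_mem _ fun j _ => Submodule.smul_mem _ _ ?_
    have := congrArg (TensorProduct.rid F H) (Coalgebra.lTensor_counit_comul (R := F) (b j : H))
    rw [hu] at this
    simp only [map_sum, LinearMap.lTensor_tmul, TensorProduct.rid_tmul, one_smul] at this
    rw [← this]
    exact Submodule.sum_mem _ fun i _ => Submodule.smul_mem _ _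
      (apply_mem_entrySpan (Matrix.of fun j i => (u j i : H)) j i)

theorem IsCocomm.apply_mul_comm {x : H} (hx : IsCocomm F H x) (f g : WithConv (H →ₗ[F] F)) :
    (f * g).ofConv x = (g * f).ofConv x := by
  have key (z : H ⊗[F] H) : LinearMap.mul' F F (TensorProduct.map f.ofConv g.ofConv z) =
      LinearMap.mul' F F (TensorProduct.map g.ofConv f.ofConv (TensorProduct.comm F H H z)) := by
    induction z with
    | zero => simp
    | add z w hz hw => simp [hz, hw]
    | tmul z w => simp [mul_comm]
  have := key (Coalgebra.comul x)
  rw [hx] at this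
  simpa [LinearMap.convMul_def] using this

theorem IsComatrix_s13.isCocomm_trace {n : Type} [Fintype n] [DecidableEq n] {u : Matrix n n H}
    (hu : IsComatrix_s13 F u) : IsCocomm F H u.trace := by
  simp only [IsCocomm, Matrix.trace, Matrix.diag_apply, map_sum, hu.comul_apply,
    TensorProduct.comm_tmul]
  exact Finset.sum_comm

namespace IsIrreducibleSystem

variable {I : Type} [Fintype I] {d : I → ℕ} [∀ i, NeZero (d i)]
  {v : Π i, Matrix (Fin (d i)) (Fin (d i)) H} {e : I → WithConv (H →ₗ[F] F)}

/-- The kernel of a representation of the dual algebra which does not kill `e i` is contained in the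
kernel of the `i`-th irreducible representation. -/
theorem rep_eq_zero_of_rep_eq_zero (h : IsIrreducibleSystem v e) {n : Type} [Fintype n]
    [DecidableEq n] {w : Matrix n n H} (hw : IsComatrix_s13 F w) {i : I} (hi : hw.rep (e i) ≠ 0)
    {f : WithConv (H →ₗ[F] F)} (hf : hw.rep f = 0) : (h.isComatrix i).rep f = 0 := by
  by_contra hne
  obtain ⟨a, b, hab⟩ : ∃ a b, (h.isComatrix i).rep f a b ≠ 0 := by
    contrapose! hne
    ext a b
    exact hne a b
  obtain ⟨g, hg⟩ := h.rep_surjective i (Matrix.single 0 a 1)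
  obtain ⟨g', hg'⟩ := h.rep_surjective i (Matrix.single b 0 ((h.isComatrix i).rep f a b)⁻¹)
  have hnil : IsNilpotent (e i - e i * (g * f * g')) := by
    refine h.isNilpotent _ fun j => ?_
    by_cases hj : j = i
    · subst hj
      rw [map_sub, map_mul, map_mul, map_mul, h.rep_self, hg, hg']
      simp [hab]
    · simp [h.rep_of_ne hj]
  have hnil' := hnil.map hw.rep
  have hrep : hw.rep (e i - e i * (g * f * g')) = hw.rep (e i) := by simp [hf]
  rw [hrep] at hnil'
  obtain ⟨m, hm⟩ := hnil'
  have := ((h.isIdempotentElem i).map hw.rep).pow_succ_eq m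
  rw [pow_succ, hm, zero_mul] at this
  exact hi this.symm

/-- Every simple subcoalgebra is spanned by the entries of an irreducible comatrix. -/
theorem exists_entrySpan_eq [CharZero F] [FiniteDimensional F H] (h : IsIrreducibleSystem v e)
    {C : Submodule F H} (hC : IsSimpleSubcoalgebra F H C) : ∃ i, entrySpan F (v i) = C := by
  obtain ⟨n, w, hw, rfl⟩ := hC.1.exists_isComatrix_s13
  obtain ⟨i, hi⟩ : ∃ i, hw.rep (e i) ≠ 0 := by
    by_contra! hall
    obtain ⟨r, hr, -⟩ := h.exists_nat_multiplicity hw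
    classical
    have hr0 (i : I) : (r i : F) = 0 := by
      have := congrArg (e i).ofConv hr
      rw [← hw.trace_rep, hall] at this
      simpa [h.apply_trace] using this.symm
    have h0 := hw.counit_trace
    rw [hr] at h0
    simp only [hr0, zero_smul, Finset.sum_const_zero, map_zero, Fintype.card_fin] at h0
    have hn : n = 0 := by exact_mod_cast h0.symm
    subst hn
    exact hC.2.1 (le_bot_iff.1 (entrySpan_le.2 fun a => a.elim0))
  refine ⟨i, hC.2.2 _ (entrySpan_le.2 fun a b => ?_) (h.isComatrix i).isSubcoalgebra_entrySpan ?_⟩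
  · by_contra hab
    obtain ⟨f, hf, hfw⟩ := Submodule.exists_le_ker_of_notMem hab
    have hwf : hw.rep (WithConv.toConv f) = 0 := by
      ext a b
      exact hfw (apply_mem_entrySpan w a b)
    exact hf (congrFun (congrFun (h.rep_eq_zero_of_rep_eq_zero hw hi hwf) a) b)
  · intro hbot
    have := trace_mem_entrySpan (F := F) (v i)
    rw [hbot, Submodule.mem_bot] at this
    simpa [this] using h.apply_trace_self i

/-- The cocommutative elements of a simple subcoalgebra are the multiples of its character. -/
theorem eq_smul_trace_of_isCocomm (h : IsIrreducibleSystem v e) {i : I} {c : H}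
    (hc : c ∈ entrySpan F (v i)) (hc' : IsCocomm F H c) :
    c = (e i).ofConv c • (v i).trace := by
  have := h.eq_sum_trace c hc'.apply_mul_comm
    fun f hf => (h.isComatrix i).apply_eq_zero_of_rep_eq_zero (hf i) hc
  rw [Finset.sum_eq_single i] at this
  · exact this
  · intro j _ hj
    rw [(h.isComatrix i).apply_eq_zero_of_rep_eq_zero (h.rep_of_ne hj.symm) hc, zero_smul]
  · simp

end IsIrreducibleSystem

end SimpleSubcoalgebras

section Harmonic

variable {I : Type*} [Fintype I] {T : I → I → ℕ} {p d : I → ℕ} {n : ℕ}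

theorem eq_of_harmonic_rat (hp : ∀ i, p i ≠ 0) (hd : ∀ i, d i ≠ 0)
    (hTd : ∀ i, ∑ j, T i j * d j = n * d i) (hpT : ∀ j, ∑ i, p i * T i j = n * p j)
    {f : I → ℚ} (hf : ∀ i, ∑ j, (T i j * d j : ℚ) * f j = (n * d i) * f i) {i j : I}
    (hij : T i j ≠ 0) : f i = f j := by
  have hTd' (i : I) : ∑ j, (T i j * d j : ℚ) = n * d i := by exact_mod_cast hTd i
  have hpT' (j : I) : ∑ i, (p i * T i j : ℚ) = n * p j := by exact_mod_cast hpT j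
  have h1 : ∑ i, ∑ j, (p i * T i j : ℚ) * (d j * f j ^ 2) = ∑ j, n * p j * (d j * f j ^ 2) := by
    rw [Finset.sum_comm]
    simp_rw [← Finset.sum_mul, hpT']
  have h2 : ∑ i, ∑ j, (p i * f i : ℚ) * ((T i j * d j) * f j) =
      ∑ i, n * p i * (d i * f i ^ 2) := by
    simp_rw [← Finset.mul_sum, hf]
    exact Finset.sum_congr rfl fun i _ => by ring
  have h3 : ∑ i, ∑ j, (p i * f i ^ 2 : ℚ) * (T i j * d j) = ∑ i, n * p i * (d i * f i ^ 2) := by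
    simp_rw [← Finset.mul_sum, hTd']
    exact Finset.sum_congr rfl fun i _ => by ring
  have h0 : ∑ i, ∑ j, (p i * T i j * d j : ℚ) * (f j - f i) ^ 2 = 0 := by
    calc _ = ∑ i, ∑ j, ((p i * T i j : ℚ) * (d j * f j ^ 2)
          - 2 * ((p i * f i : ℚ) * ((T i j * d j) * f j))
          + (p i * f i ^ 2 : ℚ) * (T i j * d j)) :=
        Finset.sum_congr rfl fun i _ => Finset.sum_congr rfl fun j _ => by ring
      _ = 0 := by
        simp only [Finset.sum_add_distrib, Finset.sum_sub_distrib, ← Finset.mul_sum]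
        simp only [Finset.mul_sum]
        rw [h1, h3]
        simp only [← Finset.mul_sum] at h2 ⊢
        rw [h2]
        ring
  rw [Finset.sum_eq_zero_iff_of_nonneg fun i _ => Finset.sum_nonneg fun j _ => by positivity] at h0
  have h4 := h0 i (Finset.mem_univ i)
  rw [Finset.sum_eq_zero_iff_of_nonneg fun j _ => by positivity] at h4
  have h5 := h4 j (Finset.mem_univ j)
  simp only [mul_eq_zero, Nat.cast_eq_zero, hp i, hij, hd j, false_or, ne_eq, OfNat.ofNat_ne_zero,
    not_false_eq_true, pow_eq_zero_iff, sub_eq_zero] at h5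
  exact h5.symm

/-- A harmonic function of a weighted graph with a positive stationary weight is constant along
edges. -/
theorem eq_of_harmonic {V : Type*} [AddCommGroup V] [Module ℚ V] (hp : ∀ i, p i ≠ 0)
    (hd : ∀ i, d i ≠ 0) (hTd : ∀ i, ∑ j, T i j * d j = n * d i)
    (hpT : ∀ j, ∑ i, p i * T i j = n * p j) {f : I → V}
    (hf : ∀ i, ∑ j, (T i j * d j : ℚ) • f j = (n * d i : ℚ) • f i) {i j : I} (hij : T i j ≠ 0) :
    f i = f j := by
  rw [← sub_eq_zero, ← Module.forall_dual_apply_eq_zero_iff ℚ]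
  intro φ
  rw [map_sub, sub_eq_zero]
  refine eq_of_harmonic_rat (f := fun i => φ (f i)) hp hd hTd hpT (fun i => ?_) hij
  simpa using congrArg φ (hf i)

end Harmonic

section Conjugates

variable {F H : Type} [Field F] [CharZero F] [Ring H] [HopfAlgebra F H] [FiniteDimensional F H]

namespace IsIrreducibleSystem

variable {I : Type} [Fintype I] {d : I → ℕ} [∀ i, NeZero (d i)]
  {v : Π i, Matrix (Fin (d i)) (Fin (d i)) H} {e : I → WithConv (H →ₗ[F] F)}

/-- The normalized products of the irreducible characters with the integral of `K` agree for
simple subcoalgebras lying in a common coset of `K`. -/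
theorem inv_smul_trace_mul_integral_eq (h : IsIrreducibleSystem v e) {K : Subalgebra F H}
    (hK : IsHopfSubalgebra F H K) {Λ : H} (hΛ : IsIdempotentIntegral F H K Λ) {i j : I}
    (hij : entrySpan F (v j) ≤ entrySpan F (v i) * K.toSubmodule) :
    (d i : F)⁻¹ • ((v i).trace * Λ) = (d j : F)⁻¹ • ((v j).trace * Λ) := by
  classical
  obtain ⟨n, κ, hκ, hκK⟩ := hK.1.exists_isComatrix_s13
  choose T hT hT' using fun i => h.exists_nat_multiplicity ((h.isComatrix i).kronecker hκ)
  simp_rw [trace_kroneckerMap_mul] at hT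
  obtain ⟨m, u, hu, hinj, habs⟩ := exists_regular_comatrix F H
  obtain ⟨p, hp, hp'⟩ := h.exists_nat_multiplicity hu
  have hd (i : I) : (d i : F) ≠ 0 := Nat.cast_ne_zero.2 (NeZero.ne _)
  have hκΛ : κ.trace * Λ = (n : F) • Λ := by
    have hmem : κ.trace ∈ K.toSubmodule := hκK ▸ trace_mem_entrySpan κ
    rw [(hΛ.2.2 _ hmem).1, hκ.counit_trace, Fintype.card_fin]
  let _ : Module ℚ H := Module.compHom H (algebraMap ℚ F)
  have hsmul (q : ℚ) (x : H) : q • x = (q : F) • x := by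
    change algebraMap ℚ F q • x = _
    rw [eq_ratCast]
  refine eq_of_harmonic (T := T) (p := p) (d := d) (n := n) (fun i hi => ?_)
    (fun i => NeZero.ne _) (fun i => ?_) (fun j => ?_)
    (f := fun i => (d i : F)⁻¹ • ((v i).trace * Λ)) (fun i => ?_) (fun hTij => ?_)
  · have := h.apply_trace_self i
    rw [hinj _ (hp' i hi)] at this
    simp at this
  · have := congrArg (Coalgebra.counit (R := F)) (hT i)
    simp only [Bialgebra.counit_mul, (h.isComatrix _).counit_trace, hκ.counit_trace, map_sum,
      map_smul, Fintype.card_fin, smul_eq_mul] at this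
    rw [mul_comm n]
    exact_mod_cast this.symm
  · have := congrArg (e j).ofConv (habs hκ)
    rw [hp, Finset.sum_mul] at this
    simp only [smul_mul_assoc, hT, map_sum, map_smul, h.apply_trace, smul_eq_mul, mul_ite,
      mul_one, mul_zero, Finset.sum_ite_eq', Finset.mem_univ, if_true] at this
    exact_mod_cast this
  · have := congrArg (· * Λ) (hT i)
    simp only [mul_assoc, hκΛ, Finset.sum_mul, smul_mul_assoc, mul_smul_comm] at this
    simp only [hsmul, smul_smul]
    push_cast
    simp only [mul_assoc, mul_inv_cancel₀ (hd _), mul_one]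
    exact this.symm
  · have hzero : entrySpan F (v i) * K.toSubmodule ≤ LinearMap.ker (e j).ofConv := by
      rw [← hκK, entrySpan, entrySpan, Submodule.span_mul_span, Submodule.span_le]
      rintro _ ⟨_, ⟨a, rfl⟩, _, ⟨b, rfl⟩, rfl⟩
      exact congrFun (congrFun (hT' i j hTij) (a.1, b.1)) (a.2, b.2)
    have := hzero (hij (trace_mem_entrySpan (v j)))
    rw [LinearMap.mem_ker, h.apply_trace_self] at this
    exact one_ne_zero this

end IsIrreducibleSystem

theorem conjK_le_conjK [IsAlgClosed F] {K : Subalgebra F H} (hK : IsHopfSubalgebra F H K) {Λ : H}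
    (hΛ : IsIdempotentIntegral F H K Λ) {C D : Submodule F H} (hC : IsSimpleSubcoalgebra F H C)
    (hD : IsSimpleSubcoalgebra F H D) (hDK : D * K.toSubmodule = C * K.toSubmodule) :
    conjK F H K Λ D ≤ conjK F H K Λ C := by
  obtain ⟨_, d, _, v, e, h⟩ := exists_isIrreducibleSystem F H
  obtain ⟨i, rfl⟩ := h.exists_entrySpan_eq hC
  obtain ⟨j, rfl⟩ := h.exists_entrySpan_eq hD
  have hle : entrySpan F (v j) ≤ entrySpan F (v i) * K.toSubmodule := fun x hx => by
    rw [← hDK, ← mul_one x]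
    exact Submodule.mul_mem_mul hx K.one_mem
  have key := h.inv_smul_trace_mul_integral_eq hK hΛ hle
  rw [inv_smul_eq_iff₀ (Nat.cast_ne_zero.2 (NeZero.ne _)), smul_smul] at key
  refine sSup_le_sSup fun E hE => ⟨hE.1, fun x hx hx' c hc hc' => ?_⟩
  rw [h.eq_smul_trace_of_isCocomm hc hc', smul_mul_assoc, key, smul_smul, mul_smul_comm,
    hE.2 x hx hx' _ (trace_mem_entrySpan (v j)) (h.isComatrix j).isCocomm_trace, smul_comm]

end Conjugates


section Statements

variable [FiniteDimensional k H] [IsSemisimpleRing H]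

/-- Proposition 34: if `C` and `D` are simple subcoalgebras of
`H` with `DK = CK`, then the conjugate Hopf subalgebras coincide:
`ᴰK = ᶜK`. -/
theorem statement_13 (K : Subalgebra k H) (hK : IsHopfSubalgebra k H K)
    (Λ : H) (hΛ : IsIdempotentIntegral k H K Λ)
    (C D : Submodule k H) (hC : IsSimpleSubcoalgebra k H C)
    (hD : IsSimpleSubcoalgebra k H D)
    (hDK : D * K.toSubmodule = C * K.toSubmodule) :
    conjK k H K Λ D = conjK k H K Λ C := by
  exact le_antisymm (conjK_le_conjK hK hΛ hC hD hDK) (conjK_le_conjK hK hΛ hD hC hDK.symm)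

end Statements

end

end MackeyPaper
end
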